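/- If the edge-probability function satisfies p(n) ≤ 1.02·ln n / n, then with high probability a graph G sampled from G(n,p) has minimum degree δ(G) ≤ (ln n)/300; consequently, for p in this range w.h.p. δ(G) − 2 ≤ (np/100)·(1/3 − ε) for some fixed ε > 0 (e.g. ε = 1/160). -/

import Mathlib

open Filter Finset SimpleGraph
open scoped Classical

/-- The probability weight of a particular graph `G` on `[n]` under `G(n,p)`. -/
noncomputable def gnpWeight (n : ℕ) (p : ℝ) (G : SimpleGraph (Fin n)) : ℝ :=
  p ^ G.edgeFinset.card * (1 - p) ^ (n.choose 2 - G.edgeFinset.card)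

/-- The probability that a random graph `G ~ G(n,p)` satisfies the predicate `A`. -/
noncomputable def gnpProb (n : ℕ) (p : ℝ) (A : SimpleGraph (Fin n) → Prop) : ℝ :=
  ∑ G : SimpleGraph (Fin n), if A G then gnpWeight n p G else 0

/-- A sequence of graph properties holds with high probability in `G(n, p n)`. -/
def WHP (p : ℕ → ℝ) (A : ∀ n : ℕ, SimpleGraph (Fin n) → Prop) : Prop :=
  Tendsto (fun n => gnpProb n (p n) (A n)) atTop (nhds 1)

/-- Number of edges of a graph. -/
noncomputable def edgeCount {V : Type*} [Fintype V] (G : SimpleGraph V) : ℕ :=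
  G.edgeFinset.card

/-- Number of edges with both endpoints in `U`. -/
noncomputable def eIn {V : Type*} [Fintype V] (G : SimpleGraph V) (U : Finset V) : ℕ :=
  (G.edgeFinset.filter (fun e => ∀ v ∈ e, v ∈ U)).card

/-- Number of edges with one endpoint in `U` and the other in `Z` (for disjoint `U`, `Z`). -/
noncomputable def eBetween {V : Type*} [Fintype V] (G : SimpleGraph V) (U Z : Finset V) : ℕ :=
  ((U ×ˢ Z).filter (fun q => G.Adj q.1 q.2)).card

/-- External neighbourhood of a vertex set. -/
noncomputable def extNbhd {V : Type*} [Fintype V] (G : SimpleGraph V) (U : Finset V) : Finset V :=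
  Finset.univ.filter (fun v => v ∉ U ∧ ∃ u ∈ U, G.Adj u v)

/-- `G` is an `(R, f)`-expander: every set `U` with `|U| ≤ R` satisfies `|N(U)| ≥ f(|U|)·|U|`. -/
def IsExpander {V : Type*} [Fintype V] (G : SimpleGraph V) (R : ℝ) (f : ℕ → ℝ) : Prop :=
  ∀ U : Finset V, U.Nonempty → (U.card : ℝ) ≤ R →
    f U.card * U.card ≤ ((extNbhd G U).card : ℝ)

/-- The expansion function `f_β` on `{1, …, ⌊β n₁⌋}`. -/
noncomputable def fBeta (β : ℝ) (n1 : ℕ) (t : ℕ) : ℝ :=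
  if t = Nat.floor (β * n1) then 2 * (1 + 39 * β) / (3 * β)
  else if (t : ℝ) < (n1 : ℝ) ^ (0.1 : ℝ) then Real.log n1 ^ (0.8 : ℝ)
  else 11

/-- `G₁` is `(n₁, d, β)`-quasi-random. -/
def QuasiRandom {V : Type*} [Fintype V] (G1 : SimpleGraph V) (n1 : ℕ) (d β : ℝ) : Prop :=
  (∀ v : V, d / 150 ≤ (G1.degree v : ℝ)) ∧
  (∀ U : Finset V, (U.card : ℝ) < (n1 : ℝ) ^ (0.11 : ℝ) * Real.log n1 →
    (eIn G1 U : ℝ) ≤ d ^ (0.13 : ℝ) * U.card) ∧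
  (∀ U : Finset V, (U.card : ℝ) < 12 * β * n1 →
    (eIn G1 U : ℝ) ≤ 50 * β * d * U.card) ∧
  (∀ U Z : Finset V, Disjoint U Z → U.card = Nat.floor (β * n1) →
    Z.card = Nat.floor ((1 / 3 - 27 * β) * n1) →
    (n1 : ℝ) * Real.log (Real.log n1) ≤ (eBetween G1 U Z : ℝ))

/-- Longest path length in `G`. -/
noncomputable def longestPath {V : Type*} [Fintype V] (G : SimpleGraph V) : ℕ :=
  sSup {l : ℕ | ∃ (u v : V) (q : G.Walk u v), q.IsPath ∧ q.length = l}

/-- `{u, v}` is a booster with respect to `Γ`. -/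
def IsBooster {V : Type*} [Fintype V] (Γ : SimpleGraph V) (u v : V) : Prop :=
  u ≠ v ∧ ¬ Γ.Adj u v ∧
    ((Γ ⊔ fromEdgeSet {s(u, v)}).IsHamiltonian ∨
      longestPath Γ < longestPath (Γ ⊔ fromEdgeSet {s(u, v)}))

/-- The booster set `B_Γ(v)`. -/
noncomputable def boosterSet {V : Type*} [Fintype V] (Γ : SimpleGraph V) (v : V) : Finset V :=
  Finset.univ.filter (fun w => IsBooster Γ v w)

/-- Membership in the family `𝓛(n, β)` with witnessing partition `V = V₁ ∪ D`. -/
def InFamilyL (n : ℕ) (β : ℝ) (G : SimpleGraph (Fin n)) (V1 D : Finset (Fin n)) : Prop :=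
  Disjoint V1 D ∧ V1 ∪ D = Finset.univ ∧
  ((D.card : ℝ) ≤ (n : ℝ) ^ (0.09 : ℝ)) ∧
  (∀ u ∈ D, 2 ≤ (G.neighborFinset u ∩ V1).card) ∧
  (∀ u ∈ D, ∀ v ∈ D, ∀ q : G.Walk u v, q.IsPath → 0 < q.length →
    2 * Real.log n / (3 * Real.log (Real.log n)) < (q.length : ℝ)) ∧
  (∀ u ∈ D, ∀ q : G.Walk u u, q.IsCycle →
    2 * Real.log n / (3 * Real.log (Real.log n)) < (q.length : ℝ)) ∧
  IsExpander (G.induce (V1 : Set (Fin n))) (β * V1.card) (fBeta β V1.card)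

/-!
Second moment method for the number of vertices of degree at most `c * n * p`. Up to factors
polynomial in `np`, a given vertex has such a degree with the Poisson lower tail probability
`exp (-klFun c * np)`, where `klFun c = c * log c + 1 - c`. When `np ≤ C * log n` and
`C * klFun c < 1`, the expected number of these vertices is at least `n ^ (1 - C * klFun c)` up to
logarithmic factors, so it tends to infinity. Two vertices share only one potential edge; ignoring
it makes their degrees independent at the cost of a factor `1 / (1 - p) ^ 2` in the second moment,
and since `p → 0` Chebyshev's inequality shows that such a vertex exists with high probability.
-/

section RandomSubsets
open MeasureTheory ProbabilityTheory unitInterval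

variable {ι : Type*} {u A B : Set ι} {p : I}

lemma measurable_inter_const (A : Set ι) : Measurable (fun s : Set ι ↦ s ∩ A) :=
  measurable_set_iff.2 fun i ↦ (measurable_set_mem i).and measurable_const

lemma map_inter_setBernoulli (u A : Set ι) (p : I) :
    setBer(u, p).map (· ∩ A) = setBer(u ∩ A, p) := by
  have hcomp : (fun s : Set ι ↦ s ∩ A) ∘ (fun P : ι → Prop ↦ {i | P i}) =
      (fun P : ι → Prop ↦ {i | P i}) ∘ fun P i ↦ P i ∧ i ∈ A := rfl
  have hset : Measurable fun P : ι → Prop ↦ {i | P i} := MeasurableEquiv.setOfPred.measurable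
  rw [setBernoulli_eq_map, setBernoulli_eq_map, Measure.map_map (measurable_inter_const A) hset,
    hcomp, ← Measure.map_map hset (by fun_prop),
    Measure.infinitePi_map_pi (f := fun i q ↦ q ∧ i ∈ A) _ fun _ ↦ .of_discrete]
  congr with i : 3
  rw [Measure.map_add _ _ .of_discrete]
  simp [Measure.map_smul, Measure.map_dirac]

lemma iIndepFun_mem_setBernoulli (u : Set ι) (p : I) :
    iIndepFun (fun i (s : Set ι) ↦ i ∈ s) setBer(u, p) := by
  have hset : Measurable fun P : ι → Prop ↦ {i | P i} := MeasurableEquiv.setOfPred.measurable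
  rw [iIndepFun_iff_map_fun_eq_infinitePi_map measurable_set_mem]
  simp_rw [setBernoulli_eq_map, Measure.map_map (measurable_set_mem _) hset]
  rw [Measure.map_map (by fun_prop) hset]
  refine Measure.map_id.trans (congrArg _ (funext fun i ↦ Eq.symm ?_))
  exact Measure.infinitePi_map_eval _ i

lemma indepFun_inter_setBernoulli [Finite ι] (hAB : Disjoint A B) :
    IndepFun (· ∩ A) (· ∩ B) setBer(u, p) := by
  cases nonempty_fintype ι
  let extend (C : Set ι) (P : C.toFinset → Prop) : Set ι := {i | ∃ hi : i ∈ C.toFinset, P ⟨i, hi⟩}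
  have hextend (C : Set ι) : (fun s ↦ s ∩ C) = extend C ∘ fun s i ↦ (i : ι) ∈ s := by
    ext s i
    simp [extend, and_comm]
  have hmeas (C : Set ι) : Measurable (extend C) := .of_discrete
  rw [hextend A, hextend B]
  exact ((iIndepFun_mem_setBernoulli u p).indepFun_finset A.toFinset B.toFinset
    (by simpa using hAB) measurable_set_mem).comp (hmeas A) (hmeas B)

lemma map_ncard_setBernoulli [Countable ι] (hu : u.Finite) (p : I) :
    setBer(u, p).map Set.ncard = Bin(u.ncard, p) := by
  refine Measure.ext_of_measureReal_singleton fun k ↦ ?_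
  rw [map_ncard_setBernoulli_real_singleton hu, binomial_real_singleton]

lemma map_ncard_inter_setBernoulli [Countable ι] (hu : (u ∩ A).Finite) (p : I) :
    setBer(u, p).map (fun s ↦ (s ∩ A).ncard) = Bin((u ∩ A).ncard, p) := by
  rw [← map_ncard_setBernoulli hu, ← map_inter_setBernoulli,
    Measure.map_map (by fun_prop) (measurable_inter_const A)]
  rfl

end RandomSubsets

section RandomGraph
open MeasureTheory ProbabilityTheory unitInterval

variable {V : Type*} {p : I}

instance [Finite V] : DiscreteMeasurableSpace (SimpleGraph V) where
  forall_measurableSet s := by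
    rw [← edgeSet_injective.preimage_image s]
    exact measurable_edgeSet .of_discrete

lemma map_edgeSet_binomialRandom [Countable V] (p : I) :
    G(V, p).map edgeSet = setBer(Sym2.diagSetᶜ, p) := by
  rw [binomialRandom, measurableEmbedding_edgeSet.map_comap]
  refine Measure.restrict_eq_self_of_ae_mem ?_
  filter_upwards [setBernoulli_ae_subset] with s hs
  exact ⟨fromEdgeSet s, by simpa [Set.subset_compl_iff_disjoint_right] using hs⟩

lemma map_ncard_edgeSet_inter_binomialRandom [Finite V] (A : Set (Sym2 V)) (p : I) :
    G(V, p).map (fun G ↦ (G.edgeSet ∩ A).ncard) = Bin((Sym2.diagSetᶜ ∩ A).ncard, p) := by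
  have hcard : Measurable fun s : Set (Sym2 V) ↦ (s ∩ A).ncard := .of_discrete
  rw [← map_ncard_inter_setBernoulli (Set.toFinite _), ← map_edgeSet_binomialRandom,
    Measure.map_map hcard measurable_edgeSet]
  rfl

lemma indepFun_edgeSet_inter_binomialRandom [Finite V] {A B : Set (Sym2 V)} (hAB : Disjoint A B) :
    IndepFun (fun G ↦ G.edgeSet ∩ A) (fun G ↦ G.edgeSet ∩ B) G(V, p) := by
  have h : IndepFun (· ∩ A) (· ∩ B) (G(V, p).map edgeSet) := by
    rw [map_edgeSet_binomialRandom]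
    exact indepFun_inter_setBernoulli hAB
  rw [indepFun_iff_measure_inter_preimage_eq_mul] at h ⊢
  intro s t hs ht
  have hst := h s t hs ht
  simp_rw [Measure.map_apply measurable_edgeSet .of_discrete] at hst
  exact hst

variable [Fintype V]

lemma degree_eq_ncard_edgeSet_inter (G : SimpleGraph V) (v : V) :
    G.degree v = (G.edgeSet ∩ {e | v ∈ e}).ncard := by
  rw [← card_incidenceSet_eq_degree, ← Nat.card_eq_fintype_card]
  rfl

lemma ncard_compl_diagSet_inter_mem (v : V) :
    ((Sym2.diagSet : Set (Sym2 V))ᶜ ∩ {e | v ∈ e}).ncard = Fintype.card V - 1 := by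
  rw [← edgeSet_top, ← degree_eq_ncard_edgeSet_inter]
  convert! complete_graph_degree v

lemma ncard_compl_diagSet_inter_mem_notMem {u v : V} (huv : u ≠ v) :
    ((Sym2.diagSet : Set (Sym2 V))ᶜ ∩ {e | u ∈ e ∧ v ∉ e}).ncard = Fintype.card V - 2 := by
  have hsdiff : (Sym2.diagSet : Set (Sym2 V))ᶜ ∩ {e | u ∈ e ∧ v ∉ e} =
      (Sym2.diagSetᶜ ∩ {e | u ∈ e}) \ {s(u, v)} := by
    ext e
    have := Sym2.mem_and_mem_iff huv (z := e)
    simp only [Set.mem_inter_iff, Set.mem_sdiff, Set.mem_ofPred_eq, Set.mem_singleton_iff]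
    tauto
  rw [hsdiff, Set.ncard_sdiff_singleton_of_mem (by simpa using huv), ncard_compl_diagSet_inter_mem,
    Nat.sub_sub]

lemma map_degree_binomialRandom (v : V) (p : I) :
    G(V, p).map (fun G ↦ G.degree v) = Bin(Fintype.card V - 1, p) := by
  simp_rw [degree_eq_ncard_edgeSet_inter]
  rw [map_ncard_edgeSet_inter_binomialRandom, ncard_compl_diagSet_inter_mem]

lemma binomialRandom_real_degree_le (v : V) (p : I) (k : ℕ) :
    G(V, p).real {G | G.degree v ≤ k} = Bin(Fintype.card V - 1, p).real (Set.Iic k) := by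
  rw [← map_degree_binomialRandom v p, map_measureReal_apply .of_discrete .of_discrete]
  rfl

/- Discarding the edge `s(u, v)` makes the two degrees independent. -/
lemma binomialRandom_real_degree_le_and_degree_le {u v : V} (huv : u ≠ v) (p : I) (k : ℕ) :
    G(V, p).real {G | G.degree u ≤ k ∧ G.degree v ≤ k} ≤
      Bin(Fintype.card V - 2, p).real (Set.Iic k) ^ 2 := by
  let star (x y : V) : Set (Sym2 V) := {e | x ∈ e ∧ y ∉ e}
  let few (x y : V) : Set (SimpleGraph V) := {G | (G.edgeSet ∩ star x y).ncard ≤ k}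
  have hfew {x y : V} (hxy : x ≠ y) :
      G(V, p).real (few x y) = Bin(Fintype.card V - 2, p).real (Set.Iic k) := by
    rw [← ncard_compl_diagSet_inter_mem_notMem hxy, ← map_ncard_edgeSet_inter_binomialRandom,
      map_measureReal_apply .of_discrete .of_discrete]
    rfl
  have hdegree (x y : V) {G : SimpleGraph V} (hG : G.degree x ≤ k) : G ∈ few x y := by
    rw [degree_eq_ncard_edgeSet_inter] at hG
    exact (Set.ncard_le_ncard (Set.inter_subset_inter_right _ fun e he ↦ he.1)).trans hG
  have hdisj : Disjoint (star u v) (star v u) :=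
    Set.disjoint_left.2 fun e he he' ↦ he.2 he'.1
  have hindep := (indepFun_edgeSet_inter_binomialRandom (p := p) hdisj).meas_inter
    ⟨{s | s.ncard ≤ k}, .of_discrete, rfl⟩ ⟨{s | s.ncard ≤ k}, .of_discrete, rfl⟩
  calc G(V, p).real {G | G.degree u ≤ k ∧ G.degree v ≤ k}
      ≤ G(V, p).real (few u v ∩ few v u) :=
        measureReal_mono fun G hG ↦ ⟨hdegree u v hG.1, hdegree v u hG.2⟩
    _ = G(V, p).real (few u v) * G(V, p).real (few v u) := by
        simpa [measureReal_def] using congrArg ENNReal.toReal hindep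
    _ = Bin(Fintype.card V - 2, p).real (Set.Iic k) ^ 2 := by
        rw [hfew huv, hfew huv.symm, sq]

end RandomGraph

section SecondMoment
open MeasureTheory ProbabilityTheory

variable {Ω ι : Type*} [MeasurableSpace Ω] {μ : Measure Ω}

lemma measureReal_eq_zero_le_variance_div_sq [IsFiniteMeasure μ] {X : Ω → ℝ} (hX : MemLp X 2 μ)
    (hmean : 0 < ∫ ω, X ω ∂μ) :
    μ.real {ω | X ω = 0} ≤ Var[X; μ] / (∫ ω, X ω ∂μ) ^ 2 := by
  have hsub : {ω | X ω = 0} ⊆ {ω | ∫ ω, X ω ∂μ ≤ |X ω - ∫ ω, X ω ∂μ|} := by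
    rintro ω (hω : X ω = 0)
    simp [hω, abs_of_pos hmean]
  refine (measureReal_mono hsub).trans (ENNReal.toReal_le_of_le_ofReal ?_ ?_)
  · exact div_nonneg (variance_nonneg X μ) (sq_nonneg _)
  · exact meas_ge_le_variance_div_sq hX hmean

variable [Fintype ι] {E : ι → Set Ω}

lemma integral_sum_indicator_one [IsFiniteMeasure μ] (hE : ∀ i, MeasurableSet (E i)) :
    ∫ ω, ∑ i, (E i).indicator (1 : Ω → ℝ) ω ∂μ = ∑ i, μ.real (E i) := by
  rw [integral_finsetSum _ fun i _ ↦ (integrable_const 1).indicator (hE i)]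
  simp only [integral_indicator_one, hE]

lemma integral_sum_indicator_one_sq [IsFiniteMeasure μ] (hE : ∀ i, MeasurableSet (E i)) :
    ∫ ω, (∑ i, (E i).indicator (1 : Ω → ℝ) ω) ^ 2 ∂μ = ∑ i, ∑ j, μ.real (E i ∩ E j) := by
  have hsq (ω : Ω) : (∑ i, (E i).indicator (1 : Ω → ℝ) ω) ^ 2 =
      ∑ ij : ι × ι, (E ij.1 ∩ E ij.2).indicator (1 : Ω → ℝ) ω := by
    simp [sq, Finset.sum_mul_sum, Fintype.sum_prod_type, Set.inter_indicator_one]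
  simp_rw [hsq]
  exact (integral_sum_indicator_one (E := fun ij : ι × ι ↦ E ij.1 ∩ E ij.2)
    fun ij ↦ (hE ij.1).inter (hE ij.2)).trans (Fintype.sum_prod_type _)

lemma sum_sum_measureReal_inter_le {r q : ℝ} (hq : 0 ≤ q) (hmean : ∀ i, μ.real (E i) = r)
    (hpair : Pairwise fun i j ↦ μ.real (E i ∩ E j) ≤ q) :
    ∑ i, ∑ j, μ.real (E i ∩ E j) ≤ Fintype.card ι * r + Fintype.card ι ^ 2 * q := by
  have hterm (i j : ι) : μ.real (E i ∩ E j) ≤ (if i = j then r else 0) + q := by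
    split_ifs with hij
    · subst hij
      rw [Set.inter_self, hmean]
      linarith
    · simpa using hpair hij
  refine (Finset.sum_le_sum fun i _ ↦ Finset.sum_le_sum fun j _ ↦ hterm i j).trans_eq ?_
  simp only [Finset.sum_add_distrib, Finset.sum_ite_eq, Finset.mem_univ, if_true, Finset.sum_const,
    Finset.card_univ, nsmul_eq_mul]
  ring

lemma measureReal_compl_iUnion_le [IsProbabilityMeasure μ] [Nonempty ι]
    (hE : ∀ i, MeasurableSet (E i)) {r q : ℝ} (hr : 0 < r) (hq : 0 ≤ q)
    (hmean : ∀ i, μ.real (E i) = r) (hpair : Pairwise fun i j ↦ μ.real (E i ∩ E j) ≤ q) :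
    μ.real (⋃ i, E i)ᶜ ≤ (Fintype.card ι * r)⁻¹ + q / r ^ 2 - 1 := by
  let X : Ω → ℝ := fun ω ↦ ∑ i, (E i).indicator 1 ω
  have hX : MemLp X 2 μ := memLp_finsetSum _ fun i _ ↦ (memLp_const 1).indicator (hE i)
  have hEX : ∫ ω, X ω ∂μ = Fintype.card ι * r := by
    simp [X, integral_sum_indicator_one hE, hmean]
  have hEX2 : ∫ ω, X ω ^ 2 ∂μ ≤ Fintype.card ι * r + Fintype.card ι ^ 2 * q :=
    (integral_sum_indicator_one_sq hE).trans_le (sum_sum_measureReal_inter_le hq hmean hpair)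
  have hzero : (⋃ i, E i)ᶜ ⊆ {ω | X ω = 0} := fun ω hω ↦
    Finset.sum_eq_zero fun i _ ↦
      Set.indicator_of_notMem (fun hi ↦ hω (Set.mem_iUnion_of_mem i hi)) _
  have hmean_pos : 0 < Fintype.card ι * r := mul_pos (Nat.cast_pos.2 Fintype.card_pos) hr
  calc μ.real (⋃ i, E i)ᶜ
      ≤ μ.real {ω | X ω = 0} := measureReal_mono hzero
    _ ≤ Var[X; μ] / (∫ ω, X ω ∂μ) ^ 2 :=
        measureReal_eq_zero_le_variance_div_sq hX (hmean_pos.trans_eq hEX.symm)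
    _ ≤ (Fintype.card ι * r + Fintype.card ι ^ 2 * q - (Fintype.card ι * r) ^ 2) /
          (Fintype.card ι * r) ^ 2 := by
        rw [variance_eq_sub hX, hEX]
        gcongr
        exact hEX2
    _ = (Fintype.card ι * r)⁻¹ + q / r ^ 2 - 1 := by field_simp

end SecondMoment

section LowDegree
open MeasureTheory ProbabilityTheory unitInterval

lemma binomial_real_Iic (n k : ℕ) (p : I) :
    Bin(n, p).real (Set.Iic k) =
      ∑ i ∈ Finset.Iic k, n.choose i * (p : ℝ) ^ i * (1 - p : ℝ) ^ (n - i) := by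
  rw [← Finset.coe_Iic, ← sum_measureReal_singleton]
  simp only [binomial_real_singleton]

lemma one_sub_mul_binomial_real_Iic_le (n k : ℕ) (p : I) :
    (1 - p : ℝ) * Bin(n, p).real (Set.Iic k) ≤ Bin(n + 1, p).real (Set.Iic k) := by
  have hp : 0 ≤ (p : ℝ) := nonneg p
  have hq : 0 ≤ 1 - (p : ℝ) := one_minus_nonneg p
  rw [binomial_real_Iic, binomial_real_Iic, Finset.mul_sum]
  refine Finset.sum_le_sum fun i _ ↦ ?_
  rcases lt_or_ge n i with hni | hin
  · rw [Nat.choose_eq_zero_of_lt hni, Nat.cast_zero, zero_mul, zero_mul, mul_zero]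
    positivity
  · calc (1 - p : ℝ) * (n.choose i * (p : ℝ) ^ i * (1 - p : ℝ) ^ (n - i))
        = n.choose i * (p : ℝ) ^ i * (1 - p : ℝ) ^ (n + 1 - i) := by
          rw [Nat.succ_sub hin, pow_succ]; ring
      _ ≤ (n + 1).choose i * (p : ℝ) ^ i * (1 - p : ℝ) ^ (n + 1 - i) := by
          gcongr; exact n.le_succ

lemma one_sub_binomialRandom_real_exists_degree_le {V : Type*} [Fintype V] [Nontrivial V] {p : I}
    (hp : p < 1) {k : ℕ} (hk : 0 < Bin(Fintype.card V - 2, p).real (Set.Iic k)) :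
    1 - G(V, p).real {G | ∃ v, G.degree v ≤ k} ≤
      (Fintype.card V * ((1 - p : ℝ) * Bin(Fintype.card V - 2, p).real (Set.Iic k)))⁻¹
        + ((1 - p : ℝ) ^ 2)⁻¹ - 1 := by
  set b := Bin(Fintype.card V - 2, p).real (Set.Iic k)
  set r := Bin(Fintype.card V - 1, p).real (Set.Iic k)
  have hcard : 1 < Fintype.card V := Fintype.one_lt_card
  have hq : 0 < 1 - (p : ℝ) := sub_pos.2 hp
  have hbr : (1 - p : ℝ) * b ≤ r := by
    have := one_sub_mul_binomial_real_Iic_le (Fintype.card V - 2) k p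
    rwa [show Fintype.card V - 2 + 1 = Fintype.card V - 1 by omega] at this
  have hr : 0 < r := (mul_pos hq hk).trans_le hbr
  calc 1 - G(V, p).real {G | ∃ v, G.degree v ≤ k}
      = G(V, p).real (⋃ v, {G | G.degree v ≤ k})ᶜ := by
        rw [probReal_compl_eq_one_sub .of_discrete, Set.ofPred_exists]
    _ ≤ (Fintype.card V * r)⁻¹ + b ^ 2 / r ^ 2 - 1 :=
        measureReal_compl_iUnion_le (fun _ ↦ .of_discrete) hr (sq_nonneg b)
          (binomialRandom_real_degree_le · p k)
          fun _ _ huv ↦ binomialRandom_real_degree_le_and_degree_le huv p k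
    _ ≤ (Fintype.card V * ((1 - p : ℝ) * b))⁻¹ + b ^ 2 / ((1 - p : ℝ) * b) ^ 2 - 1 := by
        gcongr
    _ = _ := by
        rw [mul_pow, mul_comm ((1 - p : ℝ) ^ 2), div_mul_cancel_left₀ (by positivity)]

end LowDegree

section PoissonTail
open InformationTheory
open scoped Nat

lemma factorial_le_exp_one_mul_succ_mul_pow (k : ℕ) :
    (k ! : ℝ) ≤ Real.exp 1 * (k + 1) * (k / Real.exp 1) ^ k := by
  rcases k with _ | k
  · simp [Real.one_le_exp zero_le_one]
  have hstirling : Stirling.stirlingSeq (k + 1) ≤ Real.exp 1 / √2 :=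
    Stirling.stirlingSeq_one ▸ Stirling.stirlingSeq'_antitone (Nat.zero_le k)
  have hsqrt : √((k + 1 : ℕ) : ℝ) ≤ (k + 1 : ℕ) + 1 := by
    rw [Real.sqrt_le_left (by positivity)]
    nlinarith [((k + 1).cast_nonneg : (0 : ℝ) ≤ (k + 1 : ℕ))]
  rw [Stirling.stirlingSeq, div_le_iff₀ (by positivity), Real.sqrt_mul two_pos.le] at hstirling
  calc ((k + 1)! : ℝ)
      ≤ Real.exp 1 / √2 * (√2 * √(k + 1 : ℕ) * ((k + 1 : ℕ) / Real.exp 1) ^ (k + 1)) := hstirling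
    _ = Real.exp 1 * √(k + 1 : ℕ) * ((k + 1 : ℕ) / Real.exp 1) ^ (k + 1) := by
        field_simp
    _ ≤ Real.exp 1 * ((k + 1 : ℕ) + 1) * ((k + 1 : ℕ) / Real.exp 1) ^ (k + 1) := by
        gcongr

lemma factorial_floor_mul_pow_le {c t : ℝ} (hc0 : 0 < c) (hc1 : c ≤ 1) (ht : 0 ≤ t) :
    ⌊c * t⌋₊ ! * (Real.exp 1 / c) ^ ⌊c * t⌋₊ ≤ Real.exp 1 * (t + 1) * t ^ ⌊c * t⌋₊ := by
  set k := ⌊c * t⌋₊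
  have hkct : (k : ℝ) ≤ c * t := Nat.floor_le (by positivity)
  have hkt : (k : ℝ) ≤ t := hkct.trans (mul_le_of_le_one_left ht hc1)
  calc k ! * (Real.exp 1 / c) ^ k
      ≤ Real.exp 1 * (k + 1) * (k / Real.exp 1) ^ k * (Real.exp 1 / c) ^ k := by
        gcongr
        exact factorial_le_exp_one_mul_succ_mul_pow k
    _ ≤ Real.exp 1 * (t + 1) * (c * t / Real.exp 1) ^ k * (Real.exp 1 / c) ^ k := by gcongr
    _ = Real.exp 1 * (t + 1) * t ^ k := by
        rw [mul_assoc, ← mul_pow]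
        congr 2
        field_simp

lemma exp_neg_klFun_mul {c : ℝ} (hc : 0 < c) (t : ℝ) :
    Real.exp (-(klFun c * t)) = Real.exp (-t) * (Real.exp 1 / c) ^ (c * t) := by
  have hlog : Real.exp 1 / c = Real.exp (1 - Real.log c) := by rw [Real.exp_sub, Real.exp_log hc]
  rw [hlog, ← Real.exp_mul, ← Real.exp_add, klFun_apply]
  ring_nf

lemma poisson_floor_ge {c t : ℝ} (hc0 : 0 < c) (hc1 : c ≤ 1) (ht : 0 ≤ t) :
    c / (Real.exp 2 * (t + 1)) * Real.exp (-(klFun c * t)) ≤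
      Real.exp (-t) * t ^ ⌊c * t⌋₊ / ⌊c * t⌋₊ ! := by
  have hfactorial := factorial_floor_mul_pow_le hc0 hc1 ht
  have hfloor : c * t ≤ (⌊c * t⌋₊ + 1 : ℕ) := by exact_mod_cast (Nat.lt_floor_add_one (c * t)).le
  have hbase : 1 ≤ Real.exp 1 / c :=
    (one_le_div₀ hc0).2 (hc1.trans (Real.one_le_exp zero_le_one))
  set k := ⌊c * t⌋₊
  calc c / (Real.exp 2 * (t + 1)) * Real.exp (-(klFun c * t))
      = c / (Real.exp 2 * (t + 1)) * (Real.exp (-t) * (Real.exp 1 / c) ^ (c * t)) := by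
        rw [exp_neg_klFun_mul hc0]
    _ ≤ c / (Real.exp 2 * (t + 1)) * (Real.exp (-t) * (Real.exp 1 / c) ^ (k + 1)) := by
        rw [← Real.rpow_natCast _ (k + 1)]
        gcongr
    _ = Real.exp (-t) * ((Real.exp 1 / c) ^ k / (Real.exp 1 * (t + 1))) := by
        rw [pow_succ, show (2 : ℝ) = 1 + 1 by norm_num, Real.exp_add]
        field_simp
    _ ≤ Real.exp (-t) * (t ^ k / k !) := by
        gcongr ?_ * ?_
        rw [div_le_div_iff₀ (by positivity) (by positivity)]
        linarith
    _ = Real.exp (-t) * t ^ k / k ! := by rw [mul_div_assoc]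

end PoissonTail

section BinomialTail
open MeasureTheory ProbabilityTheory unitInterval InformationTheory
open scoped Nat

lemma binomial_real_singleton_ge {m k : ℕ} (hkm : k ≤ m) {p : I} (hp : p < 1) :
    ((m + 1 - k) * p : ℝ) ^ k / k ! * Real.exp (-(m * (p / (1 - p)))) ≤ Bin(m, p).real {k} := by
  have hp0 : 0 ≤ (p : ℝ) := nonneg p
  have hq0 : 0 < 1 - (p : ℝ) := sub_pos.2 hp
  have hchoose : (m + 1 - k : ℝ) ^ k / k ! ≤ m.choose k := by
    have := Nat.pow_le_choose (α := ℝ) k m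
    rwa [Nat.cast_sub (hkm.trans m.le_succ), Nat.cast_succ] at this
  have hexp : Real.exp (-(m * (p / (1 - p) : ℝ))) ≤ (1 - p : ℝ) ^ m := by
    have hlog : -(p / (1 - p) : ℝ) ≤ Real.log (1 - p) := by
      convert Real.one_sub_inv_le_log_of_pos hq0 using 1
      field_simp
      ring
    rw [← Real.exp_log hq0, ← Real.exp_nat_mul, Real.exp_le_exp, Real.exp_log hq0]
    linarith [mul_le_mul_of_nonneg_left hlog m.cast_nonneg]
  calc ((m + 1 - k) * p : ℝ) ^ k / k ! * Real.exp (-(m * (p / (1 - p))))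
      = (m + 1 - k : ℝ) ^ k / k ! * p ^ k * Real.exp (-(m * (p / (1 - p)))) := by
        rw [mul_pow]
        ring
    _ ≤ m.choose k * p ^ k * (1 - p : ℝ) ^ m := by gcongr
    _ ≤ m.choose k * p ^ k * (1 - p : ℝ) ^ (m - k) := by
        gcongr ?_ * ?_
        exact pow_le_pow_of_le_one hq0.le (by linarith) (Nat.sub_le m k)
    _ = Bin(m, p).real {k} := (binomial_real_singleton m k p).symm

lemma half_pow_le_sub_mul_pow {n k : ℕ} (hn : 0 < n) (hk : 4 * k ^ 2 ≤ n) {p : ℝ} (hp : 0 ≤ p) :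
    (n * p) ^ k / 2 ≤ ((n - 1 - k) * p) ^ k := by
  have hn0 : (0 : ℝ) < n := by positivity
  have hkk : 2 * (k * (k + 1) : ℝ) ≤ n := by
    have : 2 * (k * (k + 1)) ≤ n := by nlinarith [Nat.le_self_pow two_ne_zero k]
    exact_mod_cast this
  have hkn : (k + 1 : ℝ) ≤ n := by
    have : k + 1 ≤ n := by nlinarith [Nat.le_self_pow two_ne_zero k]
    exact_mod_cast this
  have hbernoulli : (1 / 2 : ℝ) ≤ (1 - (k + 1) / n) ^ k := calc
    (1 / 2 : ℝ) ≤ 1 + k * -((k + 1) / n) := by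
        have : k * ((k + 1) / n : ℝ) ≤ 1 / 2 := by
          rw [← mul_div_assoc, div_le_iff₀ hn0]
          linarith
        linarith
    _ ≤ (1 + -((k + 1) / n)) ^ k := by
        refine one_add_mul_le_pow ?_ k
        have : (k + 1 : ℝ) / n ≤ 1 := (div_le_one hn0).2 hkn
        linarith
    _ = (1 - (k + 1) / n) ^ k := by rw [← sub_eq_add_neg]
  calc (n * p) ^ k / 2 = (n * p) ^ k * (1 / 2) := by ring
    _ ≤ (n * p) ^ k * (1 - (k + 1) / n) ^ k := by gcongr
    _ = ((n - 1 - k) * p) ^ k := by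
        rw [← mul_pow]
        congr 1
        field_simp
        ring

lemma poisson_le_binomial_real_singleton {n k : ℕ} (hn : 2 ≤ n) (hk : 4 * k ^ 2 ≤ n) {p : I}
    (hp : 4 * (n * p : ℝ) ^ 2 ≤ n) :
    Real.exp (-(n * p)) * (n * p : ℝ) ^ k / k ! ≤
      2 * Real.exp 1 * Bin(n - 2, p).real {k} := by
  have hp0 : 0 ≤ (p : ℝ) := nonneg p
  have hn2 : (2 : ℝ) ≤ n := by exact_mod_cast hn
  have hnp2 : 4 * (n * p ^ 2 : ℝ) ≤ 1 := by
    refine le_of_mul_le_mul_left ?_ (two_pos.trans_le hn2)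
    linarith
  have hp_half : (p : ℝ) ≤ 1 / 2 := by nlinarith
  have hkn : k ≤ n - 2 := by
    have : k ≤ k ^ 2 := Nat.le_self_pow two_ne_zero k
    omega
  have hp1 : p < 1 := Subtype.coe_lt_coe.1 (hp_half.trans_lt (by norm_num : (1 / 2 : ℝ) < 1))
  have hexponent : (n - 2) * (p / (1 - p) : ℝ) ≤ n * p + 1 := by
    rw [← mul_div_assoc, div_le_iff₀ (by linarith)]
    nlinarith
  have hbinomial := binomial_real_singleton_ge hkn hp1
  rw [Nat.cast_sub hn, Nat.cast_two, show (n - 2 + 1 - k : ℝ) = n - 1 - k by ring] at hbinomial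
  calc Real.exp (-(n * p)) * (n * p : ℝ) ^ k / k !
      = 2 * Real.exp 1 * ((n * p) ^ k / 2 / k ! * Real.exp (-(n * p + 1))) := by
        rw [neg_add, Real.exp_add, Real.exp_neg 1]
        field_simp
    _ ≤ 2 * Real.exp 1 *
          (((n - 1 - k) * p) ^ k / k ! * Real.exp (-((n - 2) * (p / (1 - p))))) := by
        have hhalf := half_pow_le_sub_mul_pow (two_pos.trans_le hn) hk hp0
        have hpow : 0 ≤ ((n - 1 - k) * p : ℝ) ^ k := le_trans (by positivity) hhalf
        gcongr
    _ ≤ 2 * Real.exp 1 * Bin(n - 2, p).real {k} := by gcongr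

lemma binomial_real_Iic_floor_ge {n : ℕ} (hn : 2 ≤ n) {p : I} (hp : 4 * (n * p : ℝ) ^ 2 ≤ n)
    {c : ℝ} (hc0 : 0 < c) (hc1 : c ≤ 1) :
    c / (2 * Real.exp 3 * (n * p + 1)) * Real.exp (-(klFun c * (n * p))) ≤
      Bin(n - 2, p).real (Set.Iic ⌊c * (n * p)⌋₊) := by
  have ht : 0 ≤ (n * p : ℝ) := mul_nonneg n.cast_nonneg (nonneg p)
  have hpoisson := poisson_floor_ge hc0 hc1 ht
  set k := ⌊c * (n * p)⌋₊
  have hkt : (k : ℝ) ≤ n * p := (Nat.floor_le (by positivity)).trans (mul_le_of_le_one_left ht hc1)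
  have hk : 4 * k ^ 2 ≤ n := by
    have : (4 * k ^ 2 : ℝ) ≤ n := le_trans (by gcongr) hp
    exact_mod_cast this
  have hmono : Bin(n - 2, p).real {k} ≤ Bin(n - 2, p).real (Set.Iic k) :=
    measureReal_mono (Set.singleton_subset_iff.2 Set.self_mem_Iic)
  have hchain := hpoisson.trans (poisson_le_binomial_real_singleton hn hk hp)
  calc c / (2 * Real.exp 3 * (n * p + 1)) * Real.exp (-(klFun c * (n * p)))
      = c / (Real.exp 2 * (n * p + 1)) * Real.exp (-(klFun c * (n * p))) /
          (2 * Real.exp 1) := by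
        rw [show (3 : ℝ) = 2 + 1 by norm_num, Real.exp_add]
        field_simp
    _ ≤ Bin(n - 2, p).real {k} := (div_le_iff₀' (by positivity)).2 hchain
    _ ≤ Bin(n - 2, p).real (Set.Iic k) := hmono

end BinomialTail
section Asymptotics
open MeasureTheory ProbabilityTheory unitInterval InformationTheory
open scoped Topology

lemma eventually_mul_sq_le_of_le_mul_log {t : ℕ → ℝ} (ht0 : ∀ n, 0 ≤ t n) {C : ℝ}
    (ht : ∀ᶠ n in atTop, t n ≤ C * Real.log n) (a : ℝ) :
    ∀ᶠ n in atTop, a * t n ^ 2 ≤ (n : ℝ) := by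
  have hlog : (fun n : ℕ ↦ |a| * (C ^ 2 * Real.log n ^ 2)) =o[atTop] fun n : ℕ ↦ (n : ℝ) :=
    ((Real.isLittleO_pow_log_id_atTop.comp_tendsto tendsto_natCast_atTop_atTop).const_mul_left
      _).const_mul_left _
  filter_upwards [ht, hlog.bound zero_lt_one] with n hn hlog_n
  calc a * t n ^ 2 ≤ |a| * (C * Real.log n) ^ 2 :=
        mul_le_mul (le_abs_self a) (pow_le_pow_left₀ (ht0 n) hn 2) (sq_nonneg _) (abs_nonneg a)
    _ = |a| * (C ^ 2 * Real.log n ^ 2) := by rw [mul_pow]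
    _ ≤ n := by simpa using (le_abs_self _).trans hlog_n

lemma tendsto_zero_of_le_mul_log_div {p : ℕ → ℝ} (hp0 : ∀ᶠ n in atTop, 0 ≤ p n) {C : ℝ}
    (hp : ∀ᶠ n : ℕ in atTop, p n ≤ C * Real.log n / n) : Tendsto p atTop (𝓝 0) := by
  have hlog : Tendsto (fun n : ℕ ↦ C * (Real.log n / n)) atTop (𝓝 (C * 0)) :=
    (Real.isLittleO_log_id_atTop.tendsto_div_nhds_zero.comp
      tendsto_natCast_atTop_atTop).const_mul C
  rw [mul_zero] at hlog
  refine tendsto_of_tendsto_of_tendsto_of_le_of_le' tendsto_const_nhds hlog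
    hp0 (hp.mono fun n hn ↦ ?_)
  rwa [← mul_div_assoc]

lemma eventually_mem_Icc_of_le_mul_log_div {p : ℕ → ℝ} (hp0 : ∀ᶠ n in atTop, 0 ≤ p n) {C : ℝ}
    (hp : ∀ᶠ n : ℕ in atTop, p n ≤ C * Real.log n / n) : ∀ᶠ n in atTop, p n ∈ Set.Icc 0 1 :=
  hp0.and ((tendsto_zero_of_le_mul_log_div hp0 hp).eventually_le_const one_pos)

lemma tendsto_mul_exp_neg_mul_log_div_log {b : ℝ} (hb : b < 1) :
    Tendsto (fun n : ℕ ↦ n * (Real.exp (-(b * Real.log n)) / Real.log n)) atTop atTop := by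
  have hexp := (tendsto_exp_mul_div_rpow_atTop 1 (1 - b) (sub_pos.2 hb)).comp
    (Real.tendsto_log_atTop.comp tendsto_natCast_atTop_atTop)
  refine hexp.congr' ?_
  filter_upwards [eventually_gt_atTop 0] with n hn
  have hn' : (0 : ℝ) < n := by exact_mod_cast hn
  rw [Function.comp_apply, Function.comp_apply, Real.rpow_one, sub_mul, one_mul, sub_eq_add_neg,
    Real.exp_add, Real.exp_log hn', mul_div_assoc]

lemma tendsto_mul_binomial_real_Iic_floor {c C : ℝ} (hc0 : 0 < c) (hc1 : c ≤ 1)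
    (hcC : C * klFun c < 1) {p : ℕ → I}
    (hp : ∀ᶠ n : ℕ in atTop, (p n : ℝ) ≤ C * Real.log n / n) :
    Tendsto (fun n : ℕ ↦ n * Bin(n - 2, p n).real (Set.Iic ⌊c * (n * p n)⌋₊)) atTop atTop := by
  have ht0 (n : ℕ) : 0 ≤ (n * p n : ℝ) := mul_nonneg n.cast_nonneg (nonneg (p n))
  have ht : ∀ᶠ n : ℕ in atTop, (n * p n : ℝ) ≤ C * Real.log n := by
    filter_upwards [hp, eventually_gt_atTop 0] with n hn hn0
    exact (le_div_iff₀' (by positivity)).1 hn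
  have hlower := (tendsto_mul_exp_neg_mul_log_div_log hcC).const_mul_atTop
    (by positivity : 0 < c / (2 * Real.exp 3 * (|C| + 1)))
  refine tendsto_atTop_mono' _ ?_ hlower
  have hlog1 : ∀ᶠ n : ℕ in atTop, 1 ≤ Real.log n :=
    (Real.tendsto_log_atTop.comp tendsto_natCast_atTop_atTop).eventually_ge_atTop 1
  filter_upwards [ht, hlog1, eventually_mul_sq_le_of_le_mul_log ht0 ht 4, eventually_ge_atTop 2]
    with n htn hlog hsq hn
  have hexponent : klFun c * (n * p n) ≤ C * klFun c * Real.log n := by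
    linarith [mul_le_mul_of_nonneg_left htn (klFun_nonneg hc0.le)]
  have hdenom : (n * p n + 1 : ℝ) ≤ (|C| + 1) * Real.log n := by
    linarith [mul_le_mul_of_nonneg_right (le_abs_self C) (zero_le_one.trans hlog)]
  have ht0n := ht0 n
  calc c / (2 * Real.exp 3 * (|C| + 1)) *
        (n * (Real.exp (-(C * klFun c * Real.log n)) / Real.log n))
      = n * (c / (2 * Real.exp 3 * ((|C| + 1) * Real.log n)) *
          Real.exp (-(C * klFun c * Real.log n))) := by field_simp
    _ ≤ n * (c / (2 * Real.exp 3 * (n * p n + 1)) * Real.exp (-(klFun c * (n * p n)))) := by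
        gcongr
    _ ≤ n * Bin(n - 2, p n).real (Set.Iic ⌊c * (n * p n)⌋₊) := by
        gcongr
        exact binomial_real_Iic_floor_ge hn hsq hc0 hc1

lemma tendsto_binomialRandom_real_exists_degree_le {p : ℕ → I}
    (hp : Tendsto (fun n ↦ (p n : ℝ)) atTop (𝓝 0)) {k : ℕ → ℕ}
    (hk : Tendsto (fun n : ℕ ↦ n * Bin(n - 2, p n).real (Set.Iic (k n))) atTop atTop) :
    Tendsto (fun n ↦ G(Fin n, p n).real {G | ∃ v, G.degree v ≤ k n}) atTop (𝓝 1) := by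
  have hq : Tendsto (fun n ↦ (1 - p n : ℝ)) atTop (𝓝 1) := by
    simpa using hp.const_sub 1
  have hbound : Tendsto (fun n : ℕ ↦ 1 - ((n * ((1 - p n : ℝ) *
      Bin(n - 2, p n).real (Set.Iic (k n))))⁻¹ + ((1 - p n : ℝ) ^ 2)⁻¹ - 1)) atTop (𝓝 1) := by
    have hmean := (hq.pos_mul_atTop one_pos hk).inv_tendsto_atTop
    have hratio := (hq.pow 2).inv₀ (by norm_num)
    convert! ((hmean.add hratio).sub_const 1).const_sub 1 using 2
    · simp only [Pi.inv_apply, mul_left_comm]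
    · norm_num
  refine tendsto_of_tendsto_of_tendsto_of_le_of_le' hbound tendsto_const_nhds ?_
    (.of_forall fun n ↦ measureReal_le_one)
  filter_upwards [hk.eventually_gt_atTop 0, hp.eventually_lt_const one_pos, eventually_ge_atTop 2]
    with n hkn hpn hn
  have : Nontrivial (Fin n) := Fin.nontrivial_iff_two_le.2 hn
  have hdegree := one_sub_binomialRandom_real_exists_degree_le (V := Fin n) (p := p n) (k := k n)
    hpn (by rw [Fintype.card_fin]; exact pos_of_mul_pos_right hkn n.cast_nonneg)
  rw [Fintype.card_fin] at hdegree
  linarith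

end Asymptotics

section GnpProb
open MeasureTheory ProbabilityTheory unitInterval

lemma gnpWeight_eq_binomialRandom_real_singleton {n : ℕ} (p : I) (G : SimpleGraph (Fin n)) :
    gnpWeight n p G = G(Fin n, p).real {G} := by
  rw [gnpWeight, measureReal_def, binomialRandom_singleton, ← coe_edgeFinset,
    Set.ncard_coe_finset, Nat.card_fin]
  simp

lemma gnpProb_eq_binomialRandom_real {n : ℕ} (p : I) (A : SimpleGraph (Fin n) → Prop) :
    gnpProb n p A = G(Fin n, p).real {G | A G} := by
  simp_rw [gnpProb, gnpWeight_eq_binomialRandom_real_singleton]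
  rw [← Finset.sum_filter, sum_measureReal_singleton, Finset.coe_filter_univ]

lemma WHP.mono {p : ℕ → ℝ} (hp : ∀ᶠ n in atTop, p n ∈ Set.Icc 0 1)
    {A B : ∀ n : ℕ, SimpleGraph (Fin n) → Prop} (hA : WHP p A)
    (hAB : ∀ᶠ n in atTop, ∀ G, A n G → B n G) : WHP p B := by
  refine tendsto_of_tendsto_of_tendsto_of_le_of_le' hA tendsto_const_nhds ?_ ?_
  · filter_upwards [hp, hAB] with n hpn hABn
    lift p n to I using hpn with q
    rw [gnpProb_eq_binomialRandom_real, gnpProb_eq_binomialRandom_real]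
    exact measureReal_mono hABn
  · filter_upwards [hp] with n hpn
    lift p n to I using hpn with q
    rw [gnpProb_eq_binomialRandom_real]
    exact measureReal_le_one

end GnpProb

section MinDegree
open ProbabilityTheory unitInterval InformationTheory

theorem stmt17_general {c C : ℝ} (hc0 : 0 < c) (hc1 : c ≤ 1) (hcC : C * klFun c < 1) {p : ℕ → ℝ}
    (hp0 : ∀ᶠ n in atTop, 0 ≤ p n) (hp : ∀ᶠ n : ℕ in atTop, p n ≤ C * Real.log n / n) :
    WHP p (fun n G ↦ (G.minDegree : ℝ) ≤ c * (n * p n)) := by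
  have hmem := eventually_mem_Icc_of_le_mul_log_div hp0 hp
  let q (n : ℕ) : I := Set.projIcc 0 1 zero_le_one (p n)
  have hqp : ∀ᶠ n in atTop, (q n : ℝ) = p n :=
    hmem.mono fun n hn ↦ congrArg Subtype.val (Set.projIcc_of_mem zero_le_one hn)
  have hq : ∀ᶠ n : ℕ in atTop, (q n : ℝ) ≤ C * Real.log n / n := by
    filter_upwards [hqp, hp] with n hqn hpn
    rwa [hqn]
  have hexists := tendsto_binomialRandom_real_exists_degree_le
    (tendsto_zero_of_le_mul_log_div (.of_forall fun n ↦ nonneg (q n)) hq)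
    (tendsto_mul_binomial_real_Iic_floor hc0 hc1 hcC hq)
  have hlow : WHP p fun n G ↦ ∃ v, G.degree v ≤ ⌊c * (n * p n)⌋₊ := by
    refine hexists.congr' (hqp.mono fun n hqn ↦ ?_)
    simp only [← hqn, gnpProb_eq_binomialRandom_real]
  refine hlow.mono hmem ?_
  filter_upwards [hp0] with n hn G ⟨v, hv⟩
  calc (G.minDegree : ℝ) ≤ G.degree v := by exact_mod_cast G.minDegree_le_degree v
    _ ≤ ⌊c * (n * p n)⌋₊ := by exact_mod_cast hv
    _ ≤ c * (n * p n) := Nat.floor_le (by positivity)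

/- `c = 1 / 306` is `1 / 300` divided by the constant `1.02`. -/
lemma mul_klFun_one_div_lt_one : 1.02 * klFun (1 / 306) < 1 := by
  have hexp : Real.exp 5.5 ≤ 306 := by
    refine le_of_sq_le_sq ?_ (by norm_num)
    calc Real.exp 5.5 ^ 2 = Real.exp 1 ^ 11 := by
          rw [← Real.exp_nat_mul, ← Real.exp_nat_mul]
          norm_num
      _ ≤ 2.7182818286 ^ 11 := by
          gcongr
          exact Real.exp_one_lt_d9.le
      _ ≤ 306 ^ 2 := by norm_num
  have hlog : 5.5 ≤ Real.log 306 := (Real.le_log_iff_exp_le (by norm_num)).2 hexp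
  rw [klFun_apply, one_div, Real.log_inv]
  linarith

end MinDegree

/-- (From the proof of Theorem 2): for `p ≤ 1.02 ln n / n`, w.h.p. `δ(G) ≤ ln n / 300`;
consequently, w.h.p. `δ(G) - 2 ≤ (np/100)(1/3 - ε)` for some fixed `ε > 0`. -/
theorem stmt17 (p : ℕ → ℝ) (hp0 : ∀ n, 0 ≤ p n)
    (hhigh : ∀ n : ℕ, p n ≤ 1.02 * Real.log n / n) :
    WHP p (fun n G => ∀ hn : 0 < n,
      haveI : Nonempty (Fin n) := ⟨⟨0, hn⟩⟩
      (G.minDegree : ℝ) ≤ Real.log n / 300) ∧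
    ∃ ε : ℝ, 0 < ε ∧ WHP p (fun n G => ∀ hn : 0 < n,
      haveI : Nonempty (Fin n) := ⟨⟨0, hn⟩⟩
      (G.minDegree : ℝ) - 2 ≤ ((n : ℝ) * p n / 100) * (1 / 3 - ε)) := by
  have hmem := eventually_mem_Icc_of_le_mul_log_div (.of_forall hp0) (.of_forall hhigh)
  have hdegree := stmt17_general (by norm_num) (by norm_num) mul_klFun_one_div_lt_one
    (.of_forall hp0) (.of_forall hhigh)
  refine ⟨hdegree.mono hmem (.of_forall fun n G hG hn ↦ ?_), 1 / 160, by norm_num,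
    hdegree.mono hmem (.of_forall fun n G hG _ ↦ ?_)⟩
  · have hnp : n * p n ≤ 1.02 * Real.log n :=
      (le_div_iff₀' (by exact_mod_cast hn)).1 (hhigh n)
    linarith
  · have hnp : 0 ≤ n * p n := mul_nonneg n.cast_nonneg (hp0 n)
    linarith [hnp]
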